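/- For every integer n ≥ 5, there exists a tree G on 2n vertices that is not well-covered and satisfies I(G,x) = I(P_n*,x) as polynomials. (In particular, the conjecture of Levit and Mandrescu—that any connected graph independence equivalent to a well-covered tree is itself a well-covered tree—is false.) -/

import Mathlib

/-!
Call two rooted graphs `(G, r)` and `(G', r')` equivalent if `I(G) = I(G')` and
`I(G - r) = I(G' - r')`. Joining the root of `G` by an edge to a vertex `w` of a graph `H` gives a
graph whose independence polynomial is determined by those of `G`, `G - r`, `H` and `H - w`, so
that joins of equivalent graphs are equivalent. Rooted at the end of its spine, `P_{n+1}*` is the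
join of `P_n*` with an edge. It follows that two equivalent graphs on ten vertices, one of them
`P_5*` and the other a tree that is not well-covered, stay equivalent when a further comb is
grown from their roots.

The join with an edge also preserves being a tree and not being well-covered. On ten vertices
well-coveredness fails because of a vertex `c` with two leaves: exchanging `c` for the two leaves
in a maximal independent set produces a larger independent set.
-/

open Polynomial SimpleGraph

/-- A finset of vertices is independent: pairwise nonadjacent. -/
def IsIndepFinset {V : Type*} (G : SimpleGraph V) (s : Finset V) : Prop :=
  ∀ u ∈ s, ∀ v ∈ s, ¬ G.Adj u v

open Classical in
/-- The independence polynomial of a finite graph, with real coefficients. -/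
noncomputable def indepPoly {V : Type*} [Fintype V] (G : SimpleGraph V) : Polynomial ℝ :=
  ∑ s : Finset V, if IsIndepFinset G s then (X : Polynomial ℝ) ^ s.card else 0

/-- `xi G` : the largest real root of the independence polynomial of `G`. -/
noncomputable def xi {V : Type*} [Fintype V] (G : SimpleGraph V) : ℝ :=
  sSup {x : ℝ | (indepPoly G).eval x = 0}

/-- `Pre H G` (`H ⪯ G`) : `I(H,x) ≥ I(G,x)` for all `x ∈ [ξ(G), 0]`. -/
def Pre {V W : Type*} [Fintype V] [Fintype W] (H : SimpleGraph W) (G : SimpleGraph V) : Prop :=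
  ∀ x ∈ Set.Icc (xi G) 0, (indepPoly G).eval x ≤ (indepPoly H).eval x

/-- `SPre H G` (`H ≺ G`). -/
def SPre {V W : Type*} [Fintype V] [Fintype W] (H : SimpleGraph W) (G : SimpleGraph V) : Prop :=
  Pre H G ∧ indepPoly H ≠ indepPoly G

open Classical in
/-- A graph is well-covered if all maximal independent sets have the same size. -/
def WellCovered {V : Type*} (G : SimpleGraph V) : Prop :=
  ∀ s t : Finset V,
    IsIndepFinset G s → (∀ v ∉ s, ¬ IsIndepFinset G (insert v s)) →
    IsIndepFinset G t → (∀ v ∉ t, ¬ IsIndepFinset G (insert v t)) →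
    s.card = t.card

/-- A connected unicyclic graph: connected with as many edges as vertices. -/
def Unicyclic {V : Type*} [Fintype V] (G : SimpleGraph V) : Prop :=
  G.Connected ∧ G.edgeSet.ncard = Fintype.card V

/-- The graph star (corona with `K₁`) of `G`: each vertex `inl v` gets a pendant
vertex `inr v`. -/
def corona {V : Type*} (G : SimpleGraph V) : SimpleGraph (V ⊕ V) :=
  SimpleGraph.fromRel (fun a b =>
    match a, b with
    | Sum.inl u, Sum.inl v => G.Adj u v
    | Sum.inl u, Sum.inr v => u = v
    | _, _ => False)

/-- `Ugraph n` (`U_n`, `n ≥ 3`): a triangle `0,1,2` with `n - 3` pendant vertices attached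
to vertex `0`. -/
def Ugraph (n : ℕ) : SimpleGraph (Fin n) :=
  SimpleGraph.fromRel (fun i j => i.val = 0 ∨ (i.val = 1 ∧ j.val = 2))

/-- `Dgraph n` (`D_n`, `n ≥ 4`): a path `0,1,...,n-1` plus the chord `{0,2}`, i.e. a
triangle with a path on `n - 3` vertices attached. -/
def Dgraph (n : ℕ) : SimpleGraph (Fin n) :=
  SimpleGraph.fromRel (fun i j => j.val = i.val + 1 ∨ (i.val = 0 ∧ j.val = 2))

/-- `starGraph n` (`S_n = K_{1,n-1}`): vertex `0` adjacent to all other vertices. -/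
def starGraph (n : ℕ) : SimpleGraph (Fin n) :=
  SimpleGraph.fromRel (fun i _ => i.val = 0)

/-- `Mgraph n` (`M_n`, odd `n ≥ 5`): a triangle `0,1,2` with `(n-3)/2` paths of length two
attached at vertex `0`; the middle vertices are the odd indices `3,5,...,n-2` and the leaf
attached to middle vertex `i` is `i + 1`. -/
def Mgraph (n : ℕ) : SimpleGraph (Fin n) :=
  SimpleGraph.fromRel (fun i j =>
    (i.val = 0 ∧ (j.val ≤ 2 ∨ j.val % 2 = 1)) ∨ (i.val = 1 ∧ j.val = 2) ∨
    (i.val % 2 = 1 ∧ 3 ≤ i.val ∧ j.val = i.val + 1))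

/-- `SPgraph g k ℓ` (`G(g,k,ℓ)`, for `g ∈ {3,5}` and `k + ℓ ≥ 1`): a cycle on the vertices
`0,...,g-1`, a copy of `P_k*` on the vertices `g,...,g+2k-1` (path vertices at even offsets,
each followed by its pendant vertex) joined to the cycle vertex `0` by an edge to the
path end `g`, and a copy of `P_ℓ*` on the vertices `g+2k,...,g+2k+2ℓ-1` joined to the cycle
vertex `2` by an edge to the path end `g+2k`. -/
def SPgraph (g k ℓ : ℕ) : SimpleGraph (Fin (g + 2*k + 2*ℓ)) :=
  SimpleGraph.fromRel (fun i j =>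
    (i.val < g ∧ j.val < g ∧ (j.val = i.val + 1 ∨ (i.val = 0 ∧ j.val = g - 1))) ∨
    (i.val = 0 ∧ 0 < k ∧ j.val = g) ∨
    (g ≤ i.val ∧ i.val < g + 2*k ∧ (i.val - g) % 2 = 0 ∧
      (j.val = i.val + 1 ∨ (j.val = i.val + 2 ∧ j.val < g + 2*k))) ∨
    (i.val = 2 ∧ 0 < ℓ ∧ j.val = g + 2*k) ∨
    (g + 2*k ≤ i.val ∧ (i.val - (g + 2*k)) % 2 = 0 ∧
      (j.val = i.val + 1 ∨ j.val = i.val + 2)))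

/-- `Gtree n` (`G_{2n}`, `n ≥ 5`): the tree on `2n` vertices with path `v_1 … v_n` at
indices `0,…,n-1`, `z_1` at index `n`, `y_1, y_2` at `n+1, n+2`, `x_1, x_2` at `n+3, n+4`
(with `v_3 z_1`, `v_3 y_1`, `y_1 y_2`, `v_5 x_1`, `x_1 x_2` edges), and pendant vertices
`w_j` at index `n + j - 1` attached to `v_j` for `6 ≤ j ≤ n`. -/
def Gtree (n : ℕ) : SimpleGraph (Fin (2*n)) :=
  SimpleGraph.fromRel (fun a b =>
    (a.val + 1 = b.val ∧ b.val < n) ∨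
    (a.val = 2 ∧ (b.val = n ∨ b.val = n + 1)) ∨
    (a.val = n + 1 ∧ b.val = n + 2) ∨
    (a.val = 4 ∧ b.val = n + 3) ∨
    (a.val = n + 3 ∧ b.val = n + 4) ∨
    (5 ≤ a.val ∧ a.val < n ∧ b.val = n + a.val))

/-! ### Independent sets -/

section IndepSets

variable {V W : Type*} {G : SimpleGraph V} {H : SimpleGraph W}

lemma IsIndepFinset.mono {s t : Finset V} (ht : IsIndepFinset G t) (h : s ⊆ t) :
    IsIndepFinset G s :=
  fun u hu v hv => ht u (h hu) v (h hv)

lemma isIndepFinset_singleton (v : V) : IsIndepFinset G {v} := by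
  simp [IsIndepFinset]

lemma isIndepFinset_insert [DecidableEq V] {v : V} {s : Finset V} :
    IsIndepFinset G (insert v s) ↔ IsIndepFinset G s ∧ ∀ u ∈ s, ¬ G.Adj u v := by
  simp only [IsIndepFinset, Finset.forall_mem_insert, G.irrefl, not_false_eq_true, true_and,
    G.adj_comm v]
  grind

lemma isIndepFinset_map (e : G ≃g H) (s : Finset V) :
    IsIndepFinset H (s.map e.toEquiv.toEmbedding) ↔ IsIndepFinset G s := by
  simp only [IsIndepFinset, Finset.forall_mem_map]
  exact forall₄_congr fun u _ v _ => not_congr e.map_adj_iff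

lemma maximal_isIndepFinset_iff {s : Finset V} :
    Maximal (IsIndepFinset G) s ↔ IsIndepFinset G s ∧ ∀ v ∉ s, ∃ u ∈ s, G.Adj u v := by
  classical
  refine ⟨fun h => ⟨h.prop, fun v hv => ?_⟩, fun ⟨hs, hdom⟩ => ⟨hs, fun t ht hst v hvt => ?_⟩⟩
  · by_contra! hnadj
    exact hv <| h.le_of_ge (isIndepFinset_insert.2 ⟨h.prop, hnadj⟩) (Finset.subset_insert v s)
      (Finset.mem_insert_self v s)
  · by_contra hvs
    obtain ⟨u, hu, huv⟩ := hdom v hvs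
    exact ht u (hst hu) v hvt huv

lemma wellCovered_iff :
    WellCovered G ↔
      ∀ s t, Maximal (IsIndepFinset G) s → Maximal (IsIndepFinset G) t → s.card = t.card := by
  classical
  have key (s : Finset V) : Maximal (IsIndepFinset G) s ↔
      IsIndepFinset G s ∧ ∀ v ∉ s, ¬ IsIndepFinset G (insert v s) := by
    rw [maximal_isIndepFinset_iff]
    refine and_congr_right fun hs => ?_
    simp [isIndepFinset_insert, hs]
  simp only [key, and_imp]
  unfold WellCovered
  constructor <;> intro h s t hs hs' ht ht' <;> convert h s t hs ?_ ht ?_ <;> assumption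

lemma WellCovered.of_iso (e : G ≃g H) (hH : WellCovered H) : WellCovered G := by
  rw [wellCovered_iff] at hH ⊢
  have maximal_map {s : Finset V} (hs : Maximal (IsIndepFinset G) s) :
      Maximal (IsIndepFinset H) (s.map e.toEquiv.toEmbedding) := by
    rw [maximal_isIndepFinset_iff] at hs ⊢
    refine ⟨(isIndepFinset_map e s).2 hs.1, e.surjective.forall.2 fun v hv => ?_⟩
    obtain ⟨u, hu, huv⟩ := hs.2 v fun hvs => hv (Finset.mem_map_of_mem _ hvs)
    exact ⟨e u, Finset.mem_map_of_mem _ hu, e.map_adj_iff.2 huv⟩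
  intro s t hs ht
  simpa using hH _ _ (maximal_map hs) (maximal_map ht)

lemma not_wellCovered_of_two_leaves [Finite V] {a b c : V} (hab : a ≠ b)
    (ha : ∀ v, G.Adj a v ↔ v = c) (hb : ∀ v, G.Adj b v ↔ v = c) : ¬ WellCovered G := by
  classical
  intro hG
  obtain ⟨s, hcs, hs⟩ := Finite.exists_le_maximal (isIndepFinset_singleton (G := G) c)
  replace hcs : c ∈ s := hcs (Finset.mem_singleton_self c)
  have has : a ∉ s := fun h => hs.prop a h c hcs ((ha c).2 rfl)
  have hbs : b ∉ s := fun h => hs.prop b h c hcs ((hb c).2 rfl)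
  have hexchange : IsIndepFinset G (insert a (insert b (s.erase c))) := by
    refine isIndepFinset_insert.2 ⟨isIndepFinset_insert.2 ⟨hs.prop.mono (s.erase_subset c), ?_⟩, ?_⟩
    · grind [G.adj_comm]
    · grind [G.adj_comm]
  obtain ⟨t, hst, ht⟩ := Finite.exists_le_maximal hexchange
  have hcard := Finset.card_le_card hst
  have := wellCovered_iff.1 hG s t hs ht
  grind

end IndepSets

/-! ### Independence polynomials -/

section IndepPoly

variable {V W : Type*} [Fintype V] [Fintype W] {G : SimpleGraph V} {H : SimpleGraph W}

open Classical in
/-- The independence polynomial of `G - r`, written as a sum over the independent sets of `G` that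
avoid `r`. -/
noncomputable def indepPolyErase (G : SimpleGraph V) (r : V) : Polynomial ℝ :=
  ∑ s : Finset V, if IsIndepFinset G s ∧ r ∉ s then X ^ s.card else 0

lemma indepPoly_congr (e : G ≃g H) : indepPoly G = indepPoly H :=
  Fintype.sum_equiv e.toEquiv.finsetCongr _ _ fun s => by
    rw [Equiv.finsetCongr_apply, isIndepFinset_map, Finset.card_map]

lemma indepPolyErase_congr (e : G ≃g H) (r : V) :
    indepPolyErase G r = indepPolyErase H (e r) :=
  Fintype.sum_equiv e.toEquiv.finsetCongr _ _ fun s => by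
    classical
    rw [Equiv.finsetCongr_apply, Finset.card_map]
    exact if_congr (and_congr (isIndepFinset_map e s).symm (not_congr (Finset.mem_map' _).symm))
      rfl rfl

lemma sum_finset_fin_one {M : Type*} [AddCommMonoid M] (f : Finset (Fin 1) → M) :
    ∑ s, f s = f ∅ + f {0} := by
  rw [show (Finset.univ : Finset (Finset (Fin 1))) = {∅, {0}} by decide,
    Finset.sum_pair (by decide)]

end IndepPoly

/-! ### Joining two graphs by an edge -/

section EdgeJoin

variable {V W : Type*} {G : SimpleGraph V} {H : SimpleGraph W} {v : V} {w : W}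

/-- The disjoint union of `G` and `H` together with an edge joining `v` to `w`. -/
def edgeJoin (G : SimpleGraph V) (v : V) (H : SimpleGraph W) (w : W) : SimpleGraph (V ⊕ W) :=
  (G ⊕g H) ⊔ edge (.inl v) (.inr w)

@[simp]
lemma edgeJoin_adj_inl_inl {a b : V} :
    (edgeJoin G v H w).Adj (.inl a) (.inl b) ↔ G.Adj a b := by
  simp [edgeJoin, edge_adj]

@[simp]
lemma edgeJoin_adj_inr_inr {a b : W} :
    (edgeJoin G v H w).Adj (.inr a) (.inr b) ↔ H.Adj a b := by
  simp [edgeJoin, edge_adj]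

@[simp]
lemma edgeJoin_adj_inl_inr {a : V} {b : W} :
    (edgeJoin G v H w).Adj (.inl a) (.inr b) ↔ a = v ∧ b = w := by
  simp [edgeJoin, edge_adj]

@[simp]
lemma edgeJoin_adj_inr_inl {a : W} {b : V} :
    (edgeJoin G v H w).Adj (.inr a) (.inl b) ↔ b = v ∧ a = w := by
  rw [adj_comm, edgeJoin_adj_inl_inr]

lemma isTree_edgeJoin [Finite V] [Finite W] (hG : G.IsTree) (hH : H.IsTree) :
    (edgeJoin G v H w).IsTree := by
  have hconn : (edgeJoin G v H w).Connected := hG.connected.sum_sup_edge hH.connected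
  refine isTree_iff_connected_and_card.2
    ⟨hconn, le_antisymm ?_ hconn.card_vert_le_card_edgeSet_add_one⟩
  have hcard : Nat.card (edgeJoin G v H w).edgeSet ≤ Nat.card (G ⊕g H).edgeSet + 1 := by
    simp only [edgeJoin, edgeSet_sup, edgeSet_edge_of_ne Sum.inl_ne_inr, Set.union_singleton,
      Nat.card_coe_set_eq]
    exact Set.ncard_insert_le _ _
  rw [Nat.card_congr edgeSetSumEquiv, Nat.card_sum] at hcard
  rw [Nat.card_sum, ← (isTree_iff_connected_and_card.1 hG).2,
    ← (isTree_iff_connected_and_card.1 hH).2]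
  omega

lemma isIndepFinset_edgeJoin_disjSum {s : Finset V} {t : Finset W} :
    IsIndepFinset (edgeJoin G v H w) (s.disjSum t) ↔
      IsIndepFinset G s ∧ IsIndepFinset H t ∧ ¬ (v ∈ s ∧ w ∈ t) := by
  simp only [IsIndepFinset, Sum.forall, Finset.inl_mem_disjSum, Finset.inr_mem_disjSum,
    edgeJoin_adj_inl_inl, edgeJoin_adj_inr_inr, edgeJoin_adj_inl_inr, edgeJoin_adj_inr_inl]
  grind

lemma WellCovered.of_edgeJoin [Finite W] {u : W} (h : WellCovered (edgeJoin G v H w))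
    (huw : H.Adj u w) : WellCovered G := by
  obtain ⟨t, hut, ht⟩ := Finite.exists_le_maximal (isIndepFinset_singleton (G := H) u)
  have hwt : w ∉ t := fun hw => ht.prop u (hut (Finset.mem_singleton_self u)) w hw huw
  have maximal_disjSum {s : Finset V} (hs : Maximal (IsIndepFinset G) s) :
      Maximal (IsIndepFinset (edgeJoin G v H w)) (s.disjSum t) := by
    rw [maximal_isIndepFinset_iff] at hs ht ⊢
    refine ⟨isIndepFinset_edgeJoin_disjSum.2 ⟨hs.1, ht.1, fun hvw => hwt hvw.2⟩, ?_⟩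
    rintro (x | x) hx
    · obtain ⟨y, hy, hyx⟩ := hs.2 x (by simpa using hx)
      exact ⟨.inl y, by simpa using hy, by simpa using hyx⟩
    · obtain ⟨y, hy, hyx⟩ := ht.2 x (by simpa using hx)
      exact ⟨.inr y, by simpa using hy, by simpa using hyx⟩
  refine wellCovered_iff.2 fun s s' hs hs' => ?_
  simpa using wellCovered_iff.1 h _ _ (maximal_disjSum hs) (maximal_disjSum hs')

lemma not_wellCovered_edgeJoin_edgeJoin_bot [Finite W] (H : SimpleGraph W) (w : W) :
    ¬ WellCovered (edgeJoin (edgeJoin (⊥ : SimpleGraph (Fin 1)) 0 H w) (.inr w)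
      (⊥ : SimpleGraph (Fin 1)) 0) := by
  refine not_wellCovered_of_two_leaves (a := .inl (.inl 0)) (b := .inr 0) (c := .inl (.inr w))
    Sum.inl_ne_inr ?_ ?_ <;> rintro ((v | v) | v) <;> simp

variable [Fintype V] [Fintype W]

lemma sum_finset_disjSum {M : Type*} [AddCommMonoid M] (f : Finset (V ⊕ W) → M) :
    ∑ u, f u = ∑ s : Finset V, ∑ t : Finset W, f (s.disjSum t) := by
  rw [← Finset.sumEquiv.symm.toEquiv.sum_comp, Fintype.sum_prod_type]
  rfl

-- The independent sets containing `w` are counted by `I(H) - I(H - w)`, and they restrict to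
-- independent sets of `G` that avoid `v`.
lemma indepPoly_edgeJoin :
    indepPoly (edgeJoin G v H w) =
      indepPoly G * indepPolyErase H w +
        indepPolyErase G v * (indepPoly H - indepPolyErase H w) := by
  classical
  simp only [indepPoly, indepPolyErase, ← Finset.sum_sub_distrib, Fintype.sum_mul_sum,
    ← Finset.sum_add_distrib, sum_finset_disjSum]
  refine Fintype.sum_congr _ _ fun s => Fintype.sum_congr _ _ fun t => ?_
  simp only [isIndepFinset_edgeJoin_disjSum, Finset.card_disjSum, pow_add]
  by_cases IsIndepFinset G s <;> by_cases IsIndepFinset H t <;> by_cases v ∈ s <;>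
    by_cases w ∈ t <;> simp [*]

lemma indepPolyErase_edgeJoin_inr :
    indepPolyErase (edgeJoin G v H w) (.inr w) = indepPoly G * indepPolyErase H w := by
  classical
  simp only [indepPoly, indepPolyErase, Fintype.sum_mul_sum, sum_finset_disjSum]
  refine Fintype.sum_congr _ _ fun s => Fintype.sum_congr _ _ fun t => ?_
  simp only [isIndepFinset_edgeJoin_disjSum, Finset.card_disjSum, pow_add]
  by_cases IsIndepFinset G s <;> by_cases IsIndepFinset H t <;> by_cases w ∈ t <;> simp [*]

end EdgeJoin

/-- The comb `P_1*` is a single edge. -/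
def coronaPathGraphOneIso :
    corona (pathGraph 1) ≃g edgeJoin (⊥ : SimpleGraph (Fin 1)) 0 (⊥ : SimpleGraph (Fin 1)) 0 where
  toEquiv := Equiv.sumComm (Fin 1) (Fin 1)
  map_rel_iff' := by
    rintro (a | a) (b | b) <;> simp [corona, Subsingleton.elim _ (0 : Fin 1)]

/-- The comb `P_{n+2}*` arises from `P_{n+1}*` by joining an edge to the end of its spine. -/
def edgeJoinCoronaPathGraphIso (n : ℕ) :
    edgeJoin (corona (pathGraph (n + 1))) (.inl (Fin.last n))
      (edgeJoin (⊥ : SimpleGraph (Fin 1)) 0 (⊥ : SimpleGraph (Fin 1)) 0) (.inr 0) ≃g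
        corona (pathGraph (n + 2)) where
  toEquiv := ((Equiv.refl _).sumCongr (Equiv.sumComm _ _)).trans <|
    (Equiv.sumSumSumComm _ _ _ _).trans (finSumFinEquiv.sumCongr finSumFinEquiv)
  map_rel_iff' := by
    rintro ((a | a) | (a | a)) ((b | b) | (b | b)) <;>
      simp [corona, pathGraph_adj, Fin.ext_iff] <;> omega

/-! ### Rooted graphs -/

/-- A finite graph with a distinguished vertex. -/
structure RootedGraph where
  V : Type
  [fintype : Fintype V]
  graph : SimpleGraph V
  root : V

namespace RootedGraph

attribute [instance] RootedGraph.fintype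

/-- The independence polynomial of a rooted graph. -/
noncomputable def poly (G : RootedGraph) : Polynomial ℝ :=
  indepPoly G.graph

/-- The independence polynomial of a rooted graph with its root deleted. -/
noncomputable def polyErase (G : RootedGraph) : Polynomial ℝ :=
  indepPolyErase G.graph G.root

/-- Two rooted graphs are equivalent if they have the same independence polynomials, both before
and after deletion of the root. -/
structure IndepEquiv (G H : RootedGraph) : Prop where
  poly_eq : G.poly = H.poly
  polyErase_eq : G.polyErase = H.polyErase

/-- The rooted graph obtained by joining the roots of `G` and `H` by an edge; its root is that of
`H`, so that `G` hangs from it as a new branch. -/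
def join (G H : RootedGraph) : RootedGraph where
  V := G.V ⊕ H.V
  graph := edgeJoin G.graph G.root H.graph H.root
  root := .inr H.root

/-- The rooted graph with a single vertex. -/
def single : RootedGraph where
  V := Fin 1
  graph := ⊥
  root := 0

/-- The complete graph on two vertices, rooted at one of them. -/
def pair : RootedGraph := single.join single

/-- The comb `P_{n+1}*`, rooted at the last vertex of its spine. -/
def comb (n : ℕ) : RootedGraph where
  V := Fin (n + 1) ⊕ Fin (n + 1)
  graph := corona (pathGraph (n + 1))
  root := .inl (Fin.last n)

/-- The tree on seven vertices consisting of a center with two pendant paths on two vertices and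
two leaves, rooted at one of the leaves. -/
def spider : RootedGraph := (single.join (pair.join (pair.join single))).join single

/-- The counterexample with `2(k + 5)` vertices: from the leaf of `spider` continue with a path
`a - b - c`, root the resulting tree on ten vertices at `a`, and let a comb `P_k*` grow from
`a`. Up to isomorphism this is `Gtree (k + 5)`. -/
def combTwin : ℕ → RootedGraph
  | 0 => spider.join (pair.join single)
  | k + 1 => (combTwin k).join pair

variable {G H K : RootedGraph}

lemma IndepEquiv.symm (h : G.IndepEquiv H) : H.IndepEquiv G :=
  ⟨h.poly_eq.symm, h.polyErase_eq.symm⟩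

lemma IndepEquiv.trans (h : G.IndepEquiv H) (h' : H.IndepEquiv K) : G.IndepEquiv K :=
  ⟨h.poly_eq.trans h'.poly_eq, h.polyErase_eq.trans h'.polyErase_eq⟩

lemma IndepEquiv.of_iso (e : G.graph ≃g H.graph) (he : e G.root = H.root) : G.IndepEquiv H :=
  ⟨indepPoly_congr e, by rw [polyErase, polyErase, indepPolyErase_congr e, he]⟩

lemma poly_join (G H : RootedGraph) :
    (G.join H).poly = G.poly * H.polyErase + G.polyErase * (H.poly - H.polyErase) :=
  indepPoly_edgeJoin

lemma polyErase_join (G H : RootedGraph) : (G.join H).polyErase = G.poly * H.polyErase :=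
  indepPolyErase_edgeJoin_inr

lemma IndepEquiv.join_right (h : G.IndepEquiv H) (K : RootedGraph) :
    (G.join K).IndepEquiv (H.join K) := by
  constructor
  · rw [poly_join, poly_join, h.poly_eq, h.polyErase_eq]
  · rw [polyErase_join, polyErase_join, h.poly_eq]

lemma poly_single : single.poly = 1 + X := by
  change indepPoly (⊥ : SimpleGraph (Fin 1)) = 1 + X
  rw [indepPoly, sum_finset_fin_one]
  simp [IsIndepFinset]

lemma polyErase_single : single.polyErase = 1 := by
  change indepPolyErase (⊥ : SimpleGraph (Fin 1)) 0 = 1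
  rw [indepPolyErase, sum_finset_fin_one]
  simp [IsIndepFinset]

lemma isTree_single : single.graph.IsTree :=
  haveI : Subsingleton single.V := inferInstanceAs (Subsingleton (Fin 1))
  haveI : Nonempty single.V := ⟨single.root⟩
  .of_subsingleton

lemma isTree_join (hG : G.graph.IsTree) (hH : H.graph.IsTree) : (G.join H).graph.IsTree :=
  isTree_edgeJoin hG hH

lemma isTree_pair : pair.graph.IsTree :=
  isTree_join isTree_single isTree_single

lemma isTree_spider : spider.graph.IsTree :=
  isTree_join (isTree_join isTree_single
    (isTree_join isTree_pair (isTree_join isTree_pair isTree_single))) isTree_single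

lemma isTree_combTwin (k : ℕ) : (combTwin k).graph.IsTree := by
  induction k with
  | zero => exact isTree_join isTree_spider (isTree_join isTree_pair isTree_single)
  | succ k ih => exact isTree_join ih isTree_pair

lemma card_combTwin (k : ℕ) : Fintype.card (combTwin k).V = 2 * (k + 5) := by
  induction k with
  | zero => rfl
  | succ k ih =>
    have : Fintype.card ((combTwin k).V ⊕ pair.V) = Fintype.card (combTwin k).V + 2 :=
      Fintype.card_sum
    exact this.trans (by rw [ih]; ring)

lemma join_adj_root (G H : RootedGraph) :
    (G.join H).graph.Adj (.inl G.root) (G.join H).root :=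
  edgeJoin_adj_inl_inr.2 ⟨rfl, rfl⟩

lemma not_wellCovered_join_join (hG : ¬ WellCovered G.graph) (H K : RootedGraph) :
    ¬ WellCovered (G.join (H.join K)).graph :=
  fun h => hG (h.of_edgeJoin (join_adj_root H K))

lemma not_wellCovered_join_join_single (H : RootedGraph) :
    ¬ WellCovered ((single.join H).join single).graph :=
  not_wellCovered_edgeJoin_edgeJoin_bot H.graph H.root

lemma not_wellCovered_spider : ¬ WellCovered spider.graph :=
  not_wellCovered_join_join_single _

lemma not_wellCovered_combTwin (k : ℕ) : ¬ WellCovered (combTwin k).graph := by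
  induction k with
  | zero => exact not_wellCovered_join_join not_wellCovered_spider pair single
  | succ k ih => exact not_wellCovered_join_join ih single single

lemma comb_zero_indepEquiv : (comb 0).IndepEquiv pair :=
  .of_iso coronaPathGraphOneIso rfl

lemma comb_succ_indepEquiv (n : ℕ) : (comb (n + 1)).IndepEquiv ((comb n).join pair) :=
  .symm <| .of_iso (edgeJoinCoronaPathGraphIso n) rfl

lemma combTwin_zero_indepEquiv : (combTwin 0).IndepEquiv (comb 4) := by
  constructor <;>
    simp only [(comb_succ_indepEquiv _).poly_eq, (comb_succ_indepEquiv _).polyErase_eq,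
      comb_zero_indepEquiv.poly_eq, comb_zero_indepEquiv.polyErase_eq, combTwin, spider, pair,
      poly_join, polyErase_join, poly_single, polyErase_single] <;>
    ring

lemma combTwin_indepEquiv (k : ℕ) : (combTwin k).IndepEquiv (comb (k + 4)) := by
  induction k with
  | zero => exact combTwin_zero_indepEquiv
  | succ k ih => exact (ih.join_right pair).trans (comb_succ_indepEquiv (k + 4)).symm

end RootedGraph

/-- For every `n ≥ 5`, there exists a tree on `2n` vertices that is not
well-covered but has the same independence polynomial as the well-covered tree `P_n*`. -/
theorem stmt15 (n : ℕ) (hn : 5 ≤ n) :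
    ∃ G : SimpleGraph (Fin (2*n)), G.IsTree ∧ ¬ WellCovered G ∧
      indepPoly G = indepPoly (corona (pathGraph n)) := by
  obtain ⟨k, rfl⟩ := Nat.exists_eq_add_of_le' hn
  let T := RootedGraph.combTwin k
  let e : T.graph ≃g T.graph.overFin (RootedGraph.card_combTwin k) :=
    T.graph.overFinIso (RootedGraph.card_combTwin k)
  refine ⟨_, e.isTree_iff.1 (RootedGraph.isTree_combTwin k),
    fun h => RootedGraph.not_wellCovered_combTwin k (h.of_iso e), ?_⟩
  exact (indepPoly_congr e).symm.trans (RootedGraph.combTwin_indepEquiv k).poly_eq
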